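/- The quadratic-metric (QM) interpolation reproduces quadratic fields exactly: for every polynomial q in three variables of total degree at most 2 and every x ∈ ℝ³, Σ_{k=1}^{10} φ_QM^k(x) · q(p_k) = q(x). -/

import Mathlib

open MeasureTheory MvPolynomial

/-- The fifteen shape functions of the 15-node wedge element, in natural
coordinates `x = (ξ, η, ζ)` with `ξ = x 0`, `η = x 1`, `ζ = x 2`. -/
noncomputable def wedgeShape : Fin 15 → (Fin 3 → ℝ) → ℝ :=
  ![fun x => -((1 - x 0 - x 1) * (1 - x 2) * (2 * x 0 + 2 * x 1 + x 2)) / 2,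
    fun x => x 0 * (1 - x 2) * (2 * x 0 - x 2 - 2) / 2,
    fun x => x 1 * (1 - x 2) * (2 * x 1 - x 2 - 2) / 2,
    fun x => -((1 - x 0 - x 1) * (1 + x 2) * (2 * x 0 + 2 * x 1 - x 2)) / 2,
    fun x => x 0 * (1 + x 2) * (2 * x 0 + x 2 - 2) / 2,
    fun x => x 1 * (1 + x 2) * (2 * x 1 + x 2 - 2) / 2,
    fun x => 2 * x 0 * (1 - x 0 - x 1) * (1 - x 2),
    fun x => 2 * x 0 * x 1 * (1 - x 2),
    fun x => 2 * x 1 * (1 - x 0 - x 1) * (1 - x 2),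
    fun x => 2 * x 0 * (1 - x 0 - x 1) * (1 + x 2),
    fun x => 2 * x 0 * x 1 * (1 + x 2),
    fun x => 2 * x 1 * (1 - x 0 - x 1) * (1 + x 2),
    fun x => (1 - x 0 - x 1) * (1 - x 2 ^ 2),
    fun x => x 0 * (1 - x 2 ^ 2),
    fun x => x 1 * (1 - x 2 ^ 2)]

/-- Natural coordinates of the fifteen nodes of the wedge element. -/
noncomputable def wedgeNode : Fin 15 → Fin 3 → ℝ :=
  ![![0, 0, -1], ![1, 0, -1], ![0, 1, -1],
    ![0, 0, 1], ![1, 0, 1], ![0, 1, 1],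
    ![1/2, 0, -1], ![1/2, 1/2, -1], ![0, 1/2, -1],
    ![1/2, 0, 1], ![1/2, 1/2, 1], ![0, 1/2, 1],
    ![0, 0, 0], ![1, 0, 0], ![0, 1, 0]]

/-- Reference domain of the fifteen-node wedge element. -/
def wedgeDomain : Set (Fin 3 → ℝ) :=
  {x | 0 ≤ x 0 ∧ 0 ≤ x 1 ∧ x 0 + x 1 ≤ 1 ∧ -1 ≤ x 2 ∧ x 2 ≤ 1}

/-- Linear-metric (LM) interpolation functions. -/
noncomputable def phiLM : Fin 4 → (Fin 3 → ℝ) → ℝ :=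
  ![fun x => 83/12 - 10 * x 0 - 10 * x 1 - 10 * x 2,
    fun x => -37/12 + 10 * x 0,
    fun x => -37/12 + 10 * x 1,
    fun x => 1/4 + 10 * x 2]

/-- The four LM evaluation points. -/
noncomputable def ptLM : Fin 4 → Fin 3 → ℝ :=
  ![![37/120, 37/120, -1/40], ![49/120, 37/120, -1/40],
    ![37/120, 49/120, -1/40], ![37/120, 37/120, 3/40]]

/-- Quadratic-metric (QM) interpolation functions. -/
noncomputable def phiQM : Fin 10 → (Fin 3 → ℝ) → ℝ :=
  ![fun x => 6391/72 - (800/3) * x 0 - (800/3) * x 1 - (800/3) * x 2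
      + 400 * x 0 * x 1 + 400 * x 0 * x 2 + 400 * x 1 * x 2
      + 200 * x 0 ^ 2 + 200 * x 1 ^ 2 + 200 * x 2 ^ 2,
    fun x => 1591/72 - (400/3) * x 0 + 200 * x 0 ^ 2,
    fun x => 1591/72 - (400/3) * x 1 + 200 * x 1 ^ 2,
    fun x => -1/8 + 200 * x 2 ^ 2,
    fun x => -3071/36 + 400 * x 0 + (370/3) * x 1 + (370/3) * x 2
      - 400 * x 0 * x 1 - 400 * x 0 * x 2 - 400 * x 0 ^ 2,
    fun x => 1369/36 - (370/3) * x 0 - (370/3) * x 1 + 400 * x 0 * x 1,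
    fun x => -3071/36 + (370/3) * x 0 + 400 * x 1 + (370/3) * x 2
      - 400 * x 0 * x 1 - 400 * x 1 * x 2 - 400 * x 1 ^ 2,
    fun x => 83/12 - 10 * x 0 - 10 * x 1 + (800/3) * x 2
      - 400 * x 0 * x 2 - 400 * x 1 * x 2 - 400 * x 2 ^ 2,
    fun x => -37/12 + 10 * x 0 - (370/3) * x 2 + 400 * x 0 * x 2,
    fun x => -37/12 + 10 * x 1 - (370/3) * x 2 + 400 * x 1 * x 2]

/-- The ten QM evaluation points. -/
noncomputable def ptQM : Fin 10 → Fin 3 → ℝ :=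
  ![![37/120, 37/120, -1/40], ![49/120, 37/120, -1/40],
    ![37/120, 49/120, -1/40], ![37/120, 37/120, 3/40],
    ![43/120, 37/120, -1/40], ![43/120, 43/120, -1/40],
    ![37/120, 43/120, -1/40], ![37/120, 37/120, 1/40],
    ![43/120, 37/120, 1/40], ![37/120, 43/120, 1/40]]

/-- The isoparametric map of the wedge element with nodal positions `X`. -/
noncomputable def wedgeMap (X : Fin 15 → Fin 3 → ℝ) (u : Fin 3 → ℝ) : Fin 3 → ℝ :=
  fun m => ∑ i : Fin 15, wedgeShape i u * X i m

/-- The Jacobian matrix `J_mn = ∂X_m/∂u_n` of the isoparametric map. -/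
noncomputable def wedgeJac (X : Fin 15 → Fin 3 → ℝ) (u : Fin 3 → ℝ) :
    Matrix (Fin 3) (Fin 3) ℝ :=
  Matrix.of fun m n => fderiv ℝ (fun v => wedgeMap X v m) u (Pi.single n 1)

/-- The metric (Jacobian determinant) of the isoparametric map. -/
noncomputable def wedgeMetric (X : Fin 15 → Fin 3 → ℝ) (u : Fin 3 → ℝ) : ℝ :=
  (wedgeJac X u).det

/-! The QM points are the vertices `ptLM` and the edge midpoints of a tetrahedron, the LM functions
`λᵢ` are its barycentric coordinates, and the QM functions are the quadratic Lagrange functions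
`λᵢ (2 λᵢ - 1)` and `4 λᵢ λⱼ`. Collected over ordered pairs of vertices, the claim becomes
`q (∑ λᵢ vᵢ) = 2 ∑ᵢⱼ λᵢ λⱼ q ((vᵢ + vⱼ) / 2) - ∑ᵢ λᵢ q (vᵢ)`. This holds for any points `vᵢ` with
weights `λᵢ` of sum one: polynomials of degree at most two are sums of products of two polynomials
of degree at most one, and the latter commute with affine combinations. -/

section AffineCombination

open scoped Pointwise in
theorem restrictTotalDegree_add (σ R : Type*) [CommSemiring R] (m n : ℕ) :
    restrictTotalDegree σ R (m + n) = restrictTotalDegree σ R m * restrictTotalDegree σ R n := by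
  have Iic_add_Iic : Set.Iic m + Set.Iic n = Set.Iic (m + n) :=
    (Set.Iic_add_Iic_subset m n).antisymm fun k hk ↦
      ⟨min k m, min_le_right k m, k - min k m, by grind, by grind⟩
  have eq_restrictSupport (k : ℕ) :
      restrictTotalDegree σ R k = restrictSupport R (Finsupp.degree ⁻¹' Set.Iic k) := rfl
  rw [eq_restrictSupport, eq_restrictSupport, eq_restrictSupport, ← Iic_add_Iic,
    Finsupp.degree_preimage_add, restrictSupport_add]

variable {ι σ R : Type*}

theorem eval_sum_smul_of_totalDegree_le_one [CommSemiring R] {s : Finset ι} {w : ι → R}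
    (hw : ∑ i ∈ s, w i = 1) (v : ι → σ → R) {p : MvPolynomial σ R} (hp : p.totalDegree ≤ 1) :
    eval (∑ i ∈ s, w i • v i) p = ∑ i ∈ s, w i * eval (v i) p := by
  rw [← mem_restrictTotalDegree, restrictTotalDegree, restrictSupport_eq_span] at hp
  induction hp using Submodule.span_induction with
  | mem p hp =>
    obtain ⟨d, hd : d.degree ≤ 1, rfl⟩ := hp
    rcases Nat.le_one_iff_eq_zero_or_eq_one.mp hd with hd | hd
    · obtain rfl := (Finsupp.degree_eq_zero_iff d).mp hd
      simp [hw]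
    · obtain ⟨a, rfl⟩ : d ∈ Set.range fun a : σ ↦ Finsupp.single a 1 :=
        Finsupp.range_single_one.ge hd
      simp [eval_monomial]
  | zero => simp
  | add p r _ _ hp hr => simp only [map_add, hp, hr, mul_add, Finset.sum_add_distrib]
  | smul c p _ hp => simp only [smul_eval, hp, Finset.mul_sum, mul_left_comm]

variable [CommRing R] [Invertible (2 : R)]

theorem eval_midpoint_of_totalDegree_le_one (x y : σ → R) {p : MvPolynomial σ R}
    (hp : p.totalDegree ≤ 1) :
    eval (midpoint R x y) p = midpoint R (eval x p) (eval y p) := by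
  have half_add_half : ∑ i, ![(⅟2 : R), ⅟2] i = 1 := by simp [invOf_two_add_invOf_two]
  simpa [midpoint_eq_smul_add, mul_add] using
    eval_sum_smul_of_totalDegree_le_one half_add_half ![x, y] hp

theorem sum_mul_sum_eq_sum_sum_midpoint {s : Finset ι} {w : ι → R} (hw : ∑ i ∈ s, w i = 1)
    (a b : ι → R) :
    (∑ i ∈ s, w i * a i) * ∑ i ∈ s, w i * b i =
      2 * ∑ i ∈ s, ∑ j ∈ s, w i * w j * (midpoint R (a i) (a j) * midpoint R (b i) (b j)) -
        ∑ i ∈ s, w i * (a i * b i) := by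
  have midpoint_mul_midpoint (i j : ι) :
      2 * (w i * w j * (midpoint R (a i) (a j) * midpoint R (b i) (b j))) =
        ⅟2 * (w i * (a i * b i) * w j + w i * (w j * (a j * b j)) +
          (w i * a i * (w j * b j) + w i * b i * (w j * a j))) := by
    simp only [midpoint_eq_smul_add, smul_eq_mul]
    linear_combination (w i * w j * ⅟2 * (a i + a j) * (b i + b j)) * mul_invOf_self (2 : R)
  simp only [Finset.mul_sum, midpoint_mul_midpoint]
  simp only [← Finset.mul_sum, Finset.sum_add_distrib, ← Finset.sum_mul, hw]
  linear_combination (-(∑ i ∈ s, w i * (a i * b i)) -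
    (∑ i ∈ s, w i * a i) * ∑ i ∈ s, w i * b i) * mul_invOf_self (2 : R)

theorem eval_sum_smul_of_totalDegree_le_two {s : Finset ι} {w : ι → R}
    (hw : ∑ i ∈ s, w i = 1) (v : ι → σ → R) {q : MvPolynomial σ R} (hq : q.totalDegree ≤ 2) :
    eval (∑ i ∈ s, w i • v i) q =
      2 * ∑ i ∈ s, ∑ j ∈ s, w i * w j * eval (midpoint R (v i) (v j)) q -
        ∑ i ∈ s, w i * eval (v i) q := by
  rw [← mem_restrictTotalDegree, restrictTotalDegree_add σ R 1 1] at hq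
  induction hq using Submodule.mul_induction_on' with
  | mem_mul_mem p hp r hr =>
    rw [mem_restrictTotalDegree] at hp hr
    simp only [map_mul, eval_sum_smul_of_totalDegree_le_one hw v hp,
      eval_sum_smul_of_totalDegree_le_one hw v hr, eval_midpoint_of_totalDegree_le_one _ _ hp,
      eval_midpoint_of_totalDegree_le_one _ _ hr, sum_mul_sum_eq_sum_sum_midpoint hw]
  | add p _ r _ hp hr =>
    simp only [map_add, hp, hr, mul_add, Finset.sum_add_distrib]
    ring

end AffineCombination

theorem sum_phiLM (x : Fin 3 → ℝ) : ∑ i, phiLM i x = 1 := by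
  simp only [phiLM, Fin.sum_univ_four, Matrix.cons_val]
  ring

theorem sum_phiLM_smul_ptLM (x : Fin 3 → ℝ) : ∑ i, phiLM i x • ptLM i = x := by
  ext m
  fin_cases m <;> simp [phiLM, ptLM, Fin.sum_univ_four] <;> ring

theorem phiQM_eq_phiLM (x : Fin 3 → ℝ) :
    (phiQM · x) =
      ![phiLM 0 x * (2 * phiLM 0 x - 1), phiLM 1 x * (2 * phiLM 1 x - 1),
        phiLM 2 x * (2 * phiLM 2 x - 1), phiLM 3 x * (2 * phiLM 3 x - 1),
        4 * phiLM 0 x * phiLM 1 x, 4 * phiLM 1 x * phiLM 2 x, 4 * phiLM 0 x * phiLM 2 x,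
        4 * phiLM 0 x * phiLM 3 x, 4 * phiLM 1 x * phiLM 3 x, 4 * phiLM 2 x * phiLM 3 x] := by
  ext k
  fin_cases k <;> simp [phiQM, phiLM] <;> ring

theorem ptQM_eq_ptLM :
    ptQM =
      ![ptLM 0, ptLM 1, ptLM 2, ptLM 3,
        midpoint ℝ (ptLM 0) (ptLM 1), midpoint ℝ (ptLM 1) (ptLM 2), midpoint ℝ (ptLM 0) (ptLM 2),
        midpoint ℝ (ptLM 0) (ptLM 3), midpoint ℝ (ptLM 1) (ptLM 3),
        midpoint ℝ (ptLM 2) (ptLM 3)] := by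
  ext k m
  fin_cases k <;> fin_cases m <;> simp [ptQM, ptLM, midpoint_eq_smul_add] <;> norm_num

theorem sum_phiQM_mul (f : (Fin 3 → ℝ) → ℝ) (x : Fin 3 → ℝ) :
    ∑ k, phiQM k x * f (ptQM k) =
      2 * ∑ i, ∑ j, phiLM i x * phiLM j x * f (midpoint ℝ (ptLM i) (ptLM j)) -
        ∑ i, phiLM i x * f (ptLM i) := by
  have phiQM_apply (k : Fin 10) := congrFun (phiQM_eq_phiLM x) k
  have midpoint_swap (i j : Fin 4) : midpoint ℝ (ptLM i) (ptLM j) = midpoint ℝ (ptLM j) (ptLM i) :=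
    midpoint_comm ..
  simp only [phiQM_apply, ptQM_eq_ptLM, Fin.sum_univ_ofNat, Fin.sum_univ_four, midpoint_self,
    midpoint_swap 1 0, midpoint_swap 2 0, midpoint_swap 3 0, midpoint_swap 2 1, midpoint_swap 3 1,
    midpoint_swap 3 2, Matrix.cons_val]
  ring

/-- the QM interpolation reproduces quadratic polynomials exactly. -/
theorem phiQM_quadratic_reproduction (q : MvPolynomial (Fin 3) ℝ)
    (hq : q.totalDegree ≤ 2) (x : Fin 3 → ℝ) :
    ∑ k : Fin 10, phiQM k x * MvPolynomial.eval (ptQM k) q =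
      MvPolynomial.eval x q := by
  rw [sum_phiQM_mul fun y ↦ eval y q, ← eval_sum_smul_of_totalDegree_le_two (sum_phiLM x) ptLM hq,
    sum_phiLM_smul_ptLM]
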